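/- Let 1 < p ≤ ∞ and let ρ, σ₁, σ be densities in M_m with σ₁ and σ positive definite. Then D_p(ρ‖σ) ≤ D_p(ρ‖σ₁) + D_∞(σ₁‖σ). -/

import Mathlib

open scoped ENNReal Classical ComplexOrder
open Matrix

noncomputable section

namespace GJL

variable {n : Type*} [Fintype n] [DecidableEq n]

/-- `Mat n` is the matrix *-algebra with rows and columns indexed by `n`. -/
abbrev Mat (n : Type*) [Fintype n] [DecidableEq n] := Matrix n n ℂ

/-- A density matrix: positive semidefinite with trace one. -/
def IsDensity (ρ : Mat n) : Prop := ρ.PosSemidef ∧ ρ.trace = 1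

/-- The real part of the (matrix) trace. -/
def traceR (A : Mat n) : ℝ := (A.trace).re

/-- Real matrix powers via the continuous functional calculus.  For positive
semidefinite matrices and negative exponents this is the generalized inverse
power on the support, since `(0 : ℝ) ^ r = 0` for `r ≠ 0`. -/
def mpow (A : Mat n) (r : ℝ) : Mat n := cfc (fun x : ℝ => x ^ r) A

/-- Matrix logarithm on the support (`Real.log 0 = 0`). -/
def mlog (A : Mat n) : Mat n := cfc Real.log A

/-- Schatten `p`-norm `(Tr ((x* x)^(p/2)))^(1/p)`. -/
def snorm (p : ℝ) (x : Mat n) : ℝ := (traceR (mpow (xᴴ * x) (p/2))) ^ (1/p)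

/-- Operator norm `‖x‖_∞`. -/
def opNorm (x : Mat n) : ℝ := ‖(Matrix.toEuclideanCLM (𝕜 := ℂ) x : EuclideanSpace ℂ n →L[ℂ] EuclideanSpace ℂ n)‖

/-- The support projection of `ρ` is dominated by that of `σ` (for positive
semidefinite matrices: `ker σ ⊆ ker ρ`). -/
def suppLe (ρ σ : Mat n) : Prop := ∀ v, σ.mulVec v = 0 → ρ.mulVec v = 0

/-- `e` is the support projection of `ρ`. -/
def IsSupportProj (ρ e : Mat n) : Prop :=
  e.IsHermitian ∧ e * e = e ∧ ∀ v, e.mulVec v = 0 ↔ ρ.mulVec v = 0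

/-- `D_∞(ρ‖σ) = log min {λ ≥ 0 | ρ ≤ λ σ}`, `⊤` if no such `λ` exists. -/
def Dinf (ρ σ : Mat n) : EReal :=
  if ∃ c : ℝ, 0 ≤ c ∧ (c • σ - ρ).PosSemidef then
    ((Real.log (sInf {c : ℝ | 0 ≤ c ∧ (c • σ - ρ).PosSemidef}) : ℝ) : EReal)
  else ⊤

/-- Umegaki relative entropy `D(ρ‖σ) = Tr(ρ log ρ - ρ log σ)`, `⊤` if the
support condition fails. -/
def DU (ρ σ : Mat n) : EReal :=
  if suppLe ρ σ then ((traceR (ρ * mlog ρ - ρ * mlog σ) : ℝ) : EReal) else ⊤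

/-- The sandwiched matrix `σ^{(1-p)/(2p)} ρ σ^{(1-p)/(2p)}`; note that for
`p > 1` the exponent `(1-p)/(2p)` equals `-1/(2p')` with `1/p + 1/p' = 1`. -/
def sandwich (p : ℝ) (ρ σ : Mat n) : Mat n :=
  mpow σ ((1 - p)/(2*p)) * ρ * mpow σ ((1 - p)/(2*p))

/-- The sandwiched Rényi relative entropy `D_p(ρ‖σ)` for `p ∈ [1/2, ∞]`:
for `p ∈ (1,∞)` it is `p' log ‖σ^{-1/(2p')} ρ σ^{-1/(2p')}‖_p
= (p-1)⁻¹ log Tr ((σ^{-1/(2p')} ρ σ^{-1/(2p')})^p)` when the support of `ρ` is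
dominated by that of `σ` and `⊤` otherwise; for `p ∈ [1/2, 1)` it is
`(p-1)⁻¹ log Tr ((σ^{(1-p)/(2p)} ρ σ^{(1-p)/(2p)})^p)` (`⊤` when the trace
vanishes, i.e. when the honest value is `+∞`); `D_1` is the Umegaki relative
entropy and `D_∞` the max-relative entropy. -/
def Dp (p : ℝ≥0∞) (ρ σ : Mat n) : EReal :=
  if p = ⊤ then Dinf ρ σ
  else if p = 1 then DU ρ σ
  else if 1 < p.toReal ∧ ¬ suppLe ρ σ then ⊤
  else if traceR (mpow (sandwich p.toReal ρ σ) p.toReal) = 0 then ⊤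
  else (((p.toReal - 1)⁻¹ * Real.log (traceR (mpow (sandwich p.toReal ρ σ) p.toReal)) : ℝ) : EReal)

/-- `D_p(ρ‖S) = inf { D_p(ρ‖σ) | σ a density in S }`. -/
def DpSet (p : ℝ≥0∞) (ρ : Mat n) (S : Set (Mat n)) : EReal :=
  ⨅ σ ∈ {σ ∈ S | IsDensity σ}, Dp p ρ σ

/-- `D_p(A‖S) = sup { D_p(ρ‖S) | ρ a density in A }`. -/
def DpRel (p : ℝ≥0∞) (A S : Set (Mat n)) : EReal :=
  ⨆ ρ ∈ {ρ ∈ A | IsDensity ρ}, DpSet p ρ S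

open scoped Kronecker in
/-- The algebraic tensor product `N₁ ⊗ N₂ ⊆ M_{n₁} ⊗ M_{n₂} = M_{n₁ × n₂}`,
realized as the linear span of Kronecker products. -/
def tensorSpan {n₁ n₂ : Type*} [Fintype n₁] [DecidableEq n₁] [Fintype n₂] [DecidableEq n₂]
    (N₁ : Set (Mat n₁)) (N₂ : Set (Mat n₂)) : Set (Mat (n₁ × n₂)) :=
  ↑(Submodule.span ℂ {z : Mat (n₁ × n₂) | ∃ x ∈ N₁, ∃ y ∈ N₂, z = x ⊗ₖ y})

/-- `D_{p,cb}(M‖N) = sup_k D_p(M_k ⊗ M ‖ M_k ⊗ N)`. -/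
def DpCb (p : ℝ≥0∞) (N : Set (Mat n)) : EReal :=
  ⨆ k : ℕ, DpRel p Set.univ (tensorSpan (Set.univ : Set (Mat (Fin k))) N)

/-- `E` is the trace preserving conditional expectation onto `N`, i.e. the
orthogonal projection onto `N` with respect to the Hilbert–Schmidt inner
product `⟨x,y⟩ = Tr(x* y)`. -/
def IsCondExp (N : Set (Mat n)) (E : Mat n →ₗ[ℂ] Mat n) : Prop :=
  (∀ x, E x ∈ N) ∧ (∀ x ∈ N, E x = x) ∧
    ∀ x y, y ∈ N → ((E x)ᴴ * y).trace = (xᴴ * y).trace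

/-- The Pimsner–Popa index constant
`λ(M:N) = max {c ≥ 0 | c x ≤ E(x) for all x ≥ 0}`. -/
def ppIndex (E : Mat n →ₗ[ℂ] Mat n) : ℝ :=
  sSup {c : ℝ | 0 ≤ c ∧ ∀ x : Mat n, x.PosSemidef → (E x - c • x).PosSemidef}

/-- von Neumann entropy `H(ρ) = -Tr(ρ log ρ)`. -/
def vnEntropy (ρ : Mat n) : ℝ := - traceR (ρ * mlog ρ)

/-- The amplification `id_{M_k} ⊗ Φ` acting on `M_k ⊗ M_n = M_{k × n}`,
applying `Φ` blockwise. -/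
def ampFun (k : Type*) [Fintype k] [DecidableEq k] (Φ : Mat n →ₗ[ℂ] Mat n)
    (X : Mat (k × n)) : Mat (k × n) :=
  Matrix.of fun a b => Φ (Matrix.of fun s t => X (a.1, s) (b.1, t)) a.2 b.2

/-- Complete positivity: all amplifications `id_{M_k} ⊗ Φ` preserve positive
semidefiniteness. -/
def IsCP (Φ : Mat n →ₗ[ℂ] Mat n) : Prop :=
  ∀ (k : ℕ) (X : Mat (Fin k × n)), X.PosSemidef → (ampFun (Fin k) Φ X).PosSemidef

/-- Completely positive and trace preserving. -/
def IsCPTP (Φ : Mat n →ₗ[ℂ] Mat n) : Prop :=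
  IsCP Φ ∧ ∀ x : Mat n, (Φ x).trace = x.trace

theorem traceR_cfc (f : ℝ → ℝ) {A : Mat n} (hA : A.IsHermitian) :
    traceR (cfc f A) = ∑ i, f (hA.eigenvalues i) := by
  rw [hA.cfc_eq f, Matrix.IsHermitian.cfc, Unitary.conjStarAlgAut_apply, traceR,
    Matrix.trace_mul_comm, ← mul_assoc]
  simp [Matrix.trace]

theorem traceR_mpow (r : ℝ) {A : Mat n} (hA : A.IsHermitian) :
    traceR (mpow A r) = ∑ i, (hA.eigenvalues i) ^ r := traceR_cfc _ hA

theorem spec_finite {A : Mat n} (hA : A.IsHermitian) : (spectrum ℝ A).Finite := by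
  rw [hA.spectrum_real_eq_range_eigenvalues]; exact Set.finite_range _

theorem spec_nonneg {A : Mat n} (hA : A.PosSemidef) {x : ℝ} (hx : x ∈ spectrum ℝ A) : 0 ≤ x := by
  rw [hA.1.spectrum_real_eq_range_eigenvalues] at hx
  obtain ⟨i, rfl⟩ := hx
  exact hA.eigenvalues_nonneg i

theorem mpow_smul {A : Mat n} (hA : A.PosSemidef) {c : ℝ} (hc : 0 ≤ c) (r : ℝ) :
    mpow (c • A) r = c ^ r • mpow A r := by
  have hfin := spec_finite hA.1
  unfold mpow
  have h1 := cfc_comp_smul c (fun x : ℝ => x ^ r) A ((hfin.image _).continuousOn _) hA.1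
  have h2 := cfc_const_mul (c ^ r) (fun x : ℝ => x ^ r) A (hfin.continuousOn _)
  refine h1.symm.trans (Eq.trans ?_ h2)
  apply cfc_congr
  intro x hx
  exact Real.mul_rpow hc (spec_nonneg hA hx)

theorem mpow_herm (A : Mat n) (r : ℝ) : (mpow A r)ᴴ = mpow A r := by
  have : IsSelfAdjoint (mpow A r) := cfc_predicate _ A
  exact this

theorem mpow_mul_mpow {A : Mat n} (hA : A.PosDef) (r s : ℝ) :
    mpow A r * mpow A s = mpow A (r + s) := by
  have hfin := spec_finite hA.1
  unfold mpow
  rw [← cfc_mul _ _ _ (hfin.continuousOn _) (hfin.continuousOn _)]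
  apply cfc_congr
  intro x hx
  have : 0 < x := by
    rw [hA.1.spectrum_real_eq_range_eigenvalues] at hx
    obtain ⟨i, rfl⟩ := hx
    exact hA.eigenvalues_pos i
  exact (Real.rpow_add this r s).symm

theorem mpow_zero' {A : Mat n} (hA : A.PosDef) : mpow A 0 = 1 := by
  unfold mpow
  simp only [Real.rpow_zero]
  exact cfc_const_one ℝ A hA.1

theorem traceR_mpow_comm (X Y : Mat n) (h1 : (X * Y).IsHermitian) (h2 : (Y * X).IsHermitian)
    (r : ℝ) : traceR (mpow (X * Y) r) = traceR (mpow (Y * X) r) := by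
  rw [traceR_mpow r h1, traceR_mpow r h2,
    (Matrix.IsHermitian.eigenvalues_eq_eigenvalues_iff h1 h2).2 (Matrix.charpoly_mul_comm X Y)]

theorem unitary_row (W : Mat n) (h : W * star W = 1) (i : n) :
    ∑ j, Complex.normSq (W i j) = 1 := by
  have := congrFun (congrFun h i) i
  rw [Matrix.mul_apply] at this
  simp only [Matrix.star_apply, Matrix.one_apply_eq, RCLike.star_def, Complex.mul_conj] at this
  exact_mod_cast this

theorem unitary_col (W : Mat n) (h : star W * W = 1) (j : n) :
    ∑ i, Complex.normSq (W i j) = 1 := by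
  have := congrFun (congrFun h j) j
  rw [Matrix.mul_apply] at this
  simp only [Matrix.star_apply, Matrix.one_apply_eq, RCLike.star_def, mul_comm,
    Complex.mul_conj] at this
  exact_mod_cast this

theorem diag_le {A B U V : Mat n} {a b : n → ℝ} (hAB : (B - A).PosSemidef)
    (hU1 : star U * U = 1)
    (eA : A = U * diagonal (fun i => (a i : ℂ)) * star U)
    (eB : B = V * diagonal (fun i => (b i : ℂ)) * star V) (i : n) :
    a i ≤ ∑ j, Complex.normSq ((star U * V) i j) * b j := by
  set W := star U * V with hW
  have h := (hAB.conjTranspose_mul_mul_same U).diag_nonneg (i := i)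
  have e : Uᴴ * (B - A) * U =
      W * diagonal (fun i => (b i : ℂ)) * star W - diagonal (fun i => (a i : ℂ)) := by
    rw [← Matrix.star_eq_conjTranspose, mul_sub, sub_mul]
    congr 1
    · rw [eB, hW, star_mul, star_star]; simp only [mul_assoc]
    · rw [eA]; simp only [mul_assoc]; rw [hU1, mul_one, ← mul_assoc, hU1, one_mul]
  rw [e, Matrix.sub_apply, Matrix.diagonal_apply_eq, Matrix.mul_apply] at h
  simp only [Matrix.mul_diagonal, Matrix.star_apply, RCLike.star_def] at h
  have e2 : ∀ j, W i j * (b j : ℂ) * (starRingEnd ℂ) (W i j)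
      = ((Complex.normSq (W i j) * b j : ℝ) : ℂ) := by
    intro j
    rw [mul_right_comm, Complex.mul_conj]; push_cast; rfl
  simp only [e2] at h
  rw [← Complex.ofReal_sum, ← Complex.ofReal_sub] at h
  have := Complex.zero_le_real.1 h
  linarith

theorem trace_mono {A B : Mat n} (hA : A.PosSemidef) (hB : B.PosSemidef)
    (hAB : (B - A).PosSemidef) {p : ℝ} (hp : 1 ≤ p) :
    traceR (mpow A p) ≤ traceR (mpow B p) := by
  rw [traceR_mpow p hA.1, traceR_mpow p hB.1]
  set U : Mat n := (hA.1.eigenvectorUnitary : Matrix n n ℂ) with hU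
  set V : Mat n := (hB.1.eigenvectorUnitary : Matrix n n ℂ) with hV
  have hU1 : star U * U = 1 := Unitary.coe_star_mul_self _
  have hU2 : U * star U = 1 := Unitary.coe_mul_star_self _
  have hV1 : star V * V = 1 := Unitary.coe_star_mul_self _
  have hV2 : V * star V = 1 := Unitary.coe_mul_star_self _
  set a := hA.1.eigenvalues
  set b := hB.1.eigenvalues
  have eA : A = U * diagonal (fun i => (a i : ℂ)) * star U := by
    have := hA.1.spectral_theorem
    rw [Unitary.conjStarAlgAut_apply] at this
    exact this
  have eB : B = V * diagonal (fun i => (b i : ℂ)) * star V := by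
    have := hB.1.spectral_theorem
    rw [Unitary.conjStarAlgAut_apply] at this
    exact this
  set W := star U * V with hW
  have hW1 : W * star W = 1 := by
    rw [hW, star_mul, star_star, mul_assoc, ← mul_assoc V, hV2, one_mul, hU1]
  have hW2 : star W * W = 1 := by
    rw [hW, star_mul, star_star, mul_assoc, ← mul_assoc U, hU2, one_mul, hV1]
  have key : ∀ i, a i ≤ ∑ j, Complex.normSq (W i j) * b j := diag_le hAB hU1 eA eB
  calc ∑ i, a i ^ p ≤ ∑ i, ∑ j, Complex.normSq (W i j) * b j ^ p := by
        refine Finset.sum_le_sum fun i _ => ?_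
        refine (Real.rpow_le_rpow (hA.eigenvalues_nonneg i) (key i) (by linarith)).trans ?_
        exact Real.rpow_arith_mean_le_arith_mean_rpow _ _ _
          (fun j _ => Complex.normSq_nonneg _) (unitary_row W hW1 i)
          (fun j _ => hB.eigenvalues_nonneg j) hp
    _ = ∑ j, b j ^ p := by
        rw [Finset.sum_comm]
        refine Finset.sum_congr rfl fun j _ => ?_
        rw [← Finset.sum_mul, unitary_col W hW2, one_mul]

section order
open scoped MatrixOrder Matrix.Norms.L2Operator

theorem mpow_eq_rpow {A : Mat n} (hA : A.PosSemidef) (r : ℝ) : mpow A r = A ^ r :=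
  (CFC.rpow_eq_cfc_real (Matrix.nonneg_iff_posSemidef.2 hA)).symm

theorem mpow_posSemidef {A : Mat n} (hA : A.PosSemidef) (r : ℝ) : (mpow A r).PosSemidef := by
  rw [mpow_eq_rpow hA]
  exact Matrix.nonneg_iff_posSemidef.1 CFC.rpow_nonneg

theorem mpow_anti {A B : Mat n} (hA : A.PosDef) (hB : B.PosDef) (hAB : (B - A).PosSemidef)
    {s : ℝ} (hs0 : 0 < s) (hs1 : s ≤ 1) : (mpow A (-s) - mpow B (-s)).PosSemidef := by
  have h1 : A ≤ B := Matrix.le_iff.2 hAB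
  have h2 : A ^ s ≤ B ^ s := CFC.rpow_le_rpow ⟨hs0.le, hs1⟩ h1
  have hA' := hA.isStrictlyPositive
  have hB' := hB.isStrictlyPositive
  have h3 := CStarAlgebra.rpow_neg_one_le_rpow_neg_one h2 (hA'.rpow A s)
  rw [CFC.rpow_rpow A s _ hs0.ne' hA', CFC.rpow_rpow B s _ hs0.ne' hB', mul_neg_one] at h3
  rw [mpow_eq_rpow hA.posSemidef, mpow_eq_rpow hB.posSemidef]
  exact Matrix.le_iff.1 h3

theorem exists_sqrt {A : Mat n} (hA : A.PosSemidef) : ∃ Y : Mat n, A = Yᴴ * Y :=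
  CStarAlgebra.nonneg_iff_eq_star_mul_self.1 (Matrix.nonneg_iff_posSemidef.2 hA)

theorem isClosed_psd (A B : Mat n) : IsClosed {c : ℝ | 0 ≤ c ∧ (c • A - B).PosSemidef} := by
  have : {c : ℝ | 0 ≤ c ∧ (c • A - B).PosSemidef}
      = {c : ℝ | 0 ≤ c} ∩ {c : ℝ | (0 : Mat n) ≤ c • A - B} := by
    ext c; simp only [Set.mem_ofPred_eq, Set.mem_inter_iff, Matrix.nonneg_iff_posSemidef]
  rw [this]
  exact (isClosed_le continuous_const continuous_id).inter
    (isClosed_le continuous_const (by fun_prop))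

end order

theorem one_le_of_le {A B : Mat n} (hA : IsDensity A) (hB : IsDensity B) {c : ℝ}
    (h : (c • A - B).PosSemidef) : 1 ≤ c := by
  have := h.trace_nonneg
  rw [Matrix.trace_sub, Matrix.trace_smul, hA.2, hB.2] at this
  have h2 : (0 : ℂ) ≤ ((c - 1 : ℝ) : ℂ) := by simpa using this
  have := Complex.zero_le_real.1 h2
  linarith

/-- `D_∞` of densities is either `⊤` or the log of an attained constant. -/
theorem Dinf_cases {A B : Mat n} (hA : IsDensity A) (hB : IsDensity B) :
    Dinf B A = ⊤ ∨ ∃ c : ℝ, 1 ≤ c ∧ (c • A - B).PosSemidef ∧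
      Dinf B A = ((Real.log c : ℝ) : EReal) := by
  by_cases h : ∃ c : ℝ, 0 ≤ c ∧ (c • A - B).PosSemidef
  · right
    have hm := (isClosed_psd A B).csInf_mem h ⟨0, fun c hc => hc.1⟩
    exact ⟨_, one_le_of_le hA hB hm.2, hm.2, by rw [Dinf, if_pos h]⟩
  · left; rw [Dinf, if_neg h]

theorem Dinf_le {A B : Mat n} (hA : IsDensity A) (hB : IsDensity B) {c : ℝ}
    (hc : 0 ≤ c) (h : (c • A - B).PosSemidef) : Dinf B A ≤ ((Real.log c : ℝ) : EReal) := by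
  have hex : ∃ c : ℝ, 0 ≤ c ∧ (c • A - B).PosSemidef := ⟨c, hc, h⟩
  have hm := (isClosed_psd A B).csInf_mem hex ⟨0, fun c hc => hc.1⟩
  rw [Dinf, if_pos hex, EReal.coe_le_coe_iff]
  refine Real.log_le_log (zero_lt_one.trans_le (one_le_of_le hA hB hm.2)) ?_
  exact csInf_le ⟨0, fun c hc => hc.1⟩ ⟨hc, h⟩

theorem suppLe_of_posDef (ρ : Mat n) {σ : Mat n} (hσ : σ.PosDef) : suppLe ρ σ := by
  intro v hv
  have : v = 0 := by
    have h := Matrix.mulVec_injective_iff_isUnit.2 hσ.isUnit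
    exact h (by simpa using hv)
  simp [this]

theorem sandwich_psd (p : ℝ) {ρ : Mat n} (hρ : ρ.PosSemidef) (σ : Mat n) :
    (sandwich p ρ σ).PosSemidef := by
  have := hρ.conjTranspose_mul_mul_same (mpow σ ((1 - p)/(2*p)))
  rwa [mpow_herm] at this

/-- Rewriting the sandwiched trace functional. -/
theorem trace_sandwich {p : ℝ} (hp : 1 < p) {σ : Mat n} (hσ : σ.PosDef) (Y : Mat n) :
    traceR (mpow (sandwich p (Yᴴ * Y) σ) p) =
      traceR (mpow (Y * mpow σ (-((p - 1)/p)) * Yᴴ) p) := by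
  have e1 : sandwich p (Yᴴ * Y) σ = (mpow σ ((1 - p)/(2*p)) * Yᴴ) * (Y * mpow σ ((1 - p)/(2*p))) := by
    simp only [sandwich, mul_assoc]
  have e2 : Y * mpow σ (-((p - 1)/p)) * Yᴴ
      = (Y * mpow σ ((1 - p)/(2*p))) * (mpow σ ((1 - p)/(2*p)) * Yᴴ) := by
    have : -((p - 1)/p) = (1 - p)/(2*p) + (1 - p)/(2*p) := by
      field_simp; ring
    rw [this, ← mpow_mul_mpow hσ]
    simp only [mul_assoc]
  have h1 := (sandwich_psd p (Matrix.posSemidef_conjTranspose_mul_self Y) σ).1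
  have h2 : (Y * mpow σ (-((p - 1)/p)) * Yᴴ).IsHermitian :=
    ((mpow_posSemidef hσ.posSemidef _).mul_mul_conjTranspose_same Y).1
  rw [e1] at h1 ⊢
  rw [e2] at h2 ⊢
  exact traceR_mpow_comm _ _ h1 h2 p

theorem trace_sandwich_pos {p : ℝ} (hp : 1 < p) {ρ σ : Mat n} (hρ : IsDensity ρ)
    (hσ : σ.PosDef) : 0 < traceR (mpow (sandwich p ρ σ) p) := by
  have hs := sandwich_psd p hρ.1 σ
  rw [traceR_mpow p hs.1]
  refine lt_of_le_of_ne
    (Finset.sum_nonneg fun i _ => Real.rpow_nonneg (hs.eigenvalues_nonneg i) p) ?_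
  intro h0
  have h1 := (Finset.sum_eq_zero_iff_of_nonneg
    (fun i _ => Real.rpow_nonneg (hs.eigenvalues_nonneg i) p)).1 h0.symm
  have h2 : hs.1.eigenvalues = 0 := by
    funext i
    have := h1 i (Finset.mem_univ i)
    exact (Real.rpow_eq_zero (hs.eigenvalues_nonneg i) (by linarith)).1 this
  have h3 : sandwich p ρ σ = 0 := hs.1.eigenvalues_eq_zero_iff.1 h2
  have h4 : ρ = 0 := by
    set r := (1 - p)/(2*p) with hr
    have l : mpow σ (-r) * mpow σ r = 1 := by
      rw [mpow_mul_mpow hσ, neg_add_cancel, mpow_zero' hσ]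
    have l2 : mpow σ r * mpow σ (-r) = 1 := by
      rw [mpow_mul_mpow hσ, add_neg_cancel, mpow_zero' hσ]
    calc ρ = (mpow σ (-r) * mpow σ r) * ρ * (mpow σ r * mpow σ (-r)) := by
          rw [l, l2, one_mul, mul_one]
      _ = mpow σ (-r) * sandwich p ρ σ * mpow σ (-r) := by
          simp only [sandwich, mul_assoc, ← hr]
      _ = 0 := by rw [h3]; simp
  have := hρ.2
  rw [h4] at this
  simp at this

theorem trace_sandwich_le {p : ℝ} (hp : 1 < p) {ρ σ₁ σ : Mat n} (hρ : IsDensity ρ)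
    (hσ₁ : σ₁.PosDef) (hσ : σ.PosDef) {c : ℝ} (hc : 1 ≤ c) (h : (c • σ - σ₁).PosSemidef) :
    traceR (mpow (sandwich p ρ σ) p) ≤ c ^ (p - 1) * traceR (mpow (sandwich p ρ σ₁) p) := by
  obtain ⟨Y, rfl⟩ := exists_sqrt hρ.1
  have hp0 : 0 < p := by linarith
  have hc0 : 0 < c := by linarith
  rw [trace_sandwich hp hσ, trace_sandwich hp hσ₁]
  set s := (p - 1)/p with hs
  have hs0 : 0 < s := div_pos (by linarith) hp0
  have hs1 : s ≤ 1 := by rw [hs, div_le_one hp0]; linarith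
  have hcσ : (c • σ).PosDef := hσ.smul hc0
  have h1 := mpow_anti hσ₁ hcσ h hs0 hs1
  rw [mpow_smul hσ.posSemidef hc0.le] at h1
  have hA := (mpow_posSemidef hσ.posSemidef (-s)).mul_mul_conjTranspose_same Y
  have hB := (mpow_posSemidef hσ₁.posSemidef (-s)).mul_mul_conjTranspose_same Y
  have h2 := h1.mul_mul_conjTranspose_same Y
  have hk : (0:ℝ) ≤ c ^ (-s) := (Real.rpow_pos_of_pos hc0 _).le
  have e : Y * (mpow σ₁ (-s) - c ^ (-s) • mpow σ (-s)) * Yᴴ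
      = Y * mpow σ₁ (-s) * Yᴴ - c ^ (-s) • (Y * mpow σ (-s) * Yᴴ) := by
    rw [mul_sub, sub_mul, mul_smul_comm, smul_mul_assoc]
  rw [e] at h2
  have h3 := trace_mono (hA.smul hk) hB h2 hp.le
  rw [mpow_smul hA hk] at h3
  have e3 : (c ^ (-s)) ^ p = (c ^ (p - 1))⁻¹ := by
    rw [← Real.rpow_mul hc0.le, ← Real.rpow_neg hc0.le]
    congr 1
    rw [hs]; field_simp
  have e4 : ∀ (k : ℝ) (M : Mat n), traceR (k • M) = k * traceR M := by
    intro k M; simp [traceR, Matrix.trace_smul]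
  rw [e4, e3] at h3
  have hcp : 0 < c ^ (p - 1) := Real.rpow_pos_of_pos hc0 _
  rwa [inv_mul_le_iff₀ hcp] at h3

/-- for `1 < p ≤ ∞` and densities `ρ, σ₁, σ` with `σ₁, σ`
positive definite, `D_p(ρ‖σ) ≤ D_p(ρ‖σ₁) + D_∞(σ₁‖σ)`. -/
theorem statement15 {m : ℕ} (p : ℝ≥0∞) (hp : 1 < p)
    (ρ σ₁ σ : Mat (Fin m)) (hρ : IsDensity ρ) (hσ₁ : IsDensity σ₁)
    (hσ : IsDensity σ) (hσ₁pd : σ₁.PosDef) (hσpd : σ.PosDef) :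
    Dp p ρ σ ≤ Dp p ρ σ₁ + Dinf σ₁ σ := by
  rcases Dinf_cases hσ hσ₁ with h2 | ⟨c₂, hc₂, hle₂, h2⟩
  · have hbot : Dp p ρ σ₁ ≠ ⊥ := by
      unfold Dp Dinf DU
      split_ifs <;> first | exact EReal.coe_ne_bot _ | simp
    rw [h2, EReal.add_top_of_ne_bot hbot]
    exact le_top
  by_cases hpt : p = ⊤
  · subst hpt
    simp only [Dp, if_true]
    rcases Dinf_cases hσ₁ hρ with h1 | ⟨c₁, hc₁, hle₁, h1⟩
    · rw [h1, h2, EReal.top_add_coe]; exact le_top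
    · rw [h1, h2, ← EReal.coe_add, ← Real.log_mul (by linarith) (by linarith)]
      refine Dinf_le hσ hρ (by nlinarith) ?_
      have h3 := (hle₂.smul (show (0:ℝ) ≤ c₁ by linarith)).add hle₁
      convert h3 using 1
      rw [smul_sub, smul_smul]; abel
  · have hp1 : 1 < p.toReal := by
      rw [← ENNReal.toReal_one]
      exact (ENNReal.toReal_lt_toReal ENNReal.one_ne_top hpt).2 hp
    have t1 := trace_sandwich_pos hp1 hρ hσ₁pd
    have t := trace_sandwich_pos hp1 hρ hσpd
    have hle := trace_sandwich_le hp1 hρ hσ₁pd hσpd hc₂ hle₂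
    have e : ∀ τ : Mat (Fin m), τ.PosDef → Dp p ρ τ = (((p.toReal - 1)⁻¹ *
        Real.log (traceR (mpow (sandwich p.toReal ρ τ) p.toReal)) : ℝ) : EReal) := by
      intro τ hτ
      rw [Dp, if_neg hpt, if_neg hp.ne', if_neg (fun h => h.2 (suppLe_of_posDef ρ hτ)),
        if_neg (trace_sandwich_pos hp1 hρ hτ).ne']
    rw [e σ hσpd, e σ₁ hσ₁pd, h2, ← EReal.coe_add, EReal.coe_le_coe_iff]
    have hc0 : 0 < c₂ := by linarith
    have hl := Real.log_le_log t hle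
    rw [Real.log_mul (Real.rpow_pos_of_pos hc0 _).ne' t1.ne', Real.log_rpow hc0] at hl
    have hq : 0 < p.toReal - 1 := by linarith
    rw [inv_mul_le_iff₀ hq, mul_add, mul_inv_cancel_left₀ hq.ne']
    linarith

end GJL
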